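/- Let A be maximally monotone on a real Hilbert space H with S = A^{-1}(0) ≠ ∅, α > 2, λ(t) = (1+ε)t²/α² with ε > 2/(α−2). Then every solution x of ẍ(t) + (α/t)ẋ(t) + A_{λ(t)}(x(t)) = 0 converges weakly, as t → ∞, to a zero of A, and ‖ẋ(t)‖ → 0, ‖ẍ(t)‖ → 0. -/

import Mathlib

open scoped RealInnerProductSpace

variable {H : Type*} [NormedAddCommGroup H] [InnerProductSpace ℝ H] [CompleteSpace H]

/-- A set-valued operator `A : H → 2^H` is monotone. -/
def MonotoneOp (A : H → Set H) : Prop :=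
  ∀ ⦃x y u v : H⦄, u ∈ A x → v ∈ A y → 0 ≤ ⟪u - v, x - y⟫

/-- A set-valued operator is maximally monotone: monotone and with no proper
monotone extension. -/
def MaximallyMonotone (A : H → Set H) : Prop :=
  MonotoneOp A ∧
    ∀ x u : H, (∀ y v : H, v ∈ A y → 0 ≤ ⟪u - v, x - y⟫) → u ∈ A x

/-- `J` is the resolvent `(I + lam A)⁻¹` of `A` with index `lam`:
for every `x`, `J x + lam • A (J x) ∋ x`, i.e. `lam⁻¹ • (x - J x) ∈ A (J x)`. -/
def IsResolvent (A : H → Set H) (lam : ℝ) (J : H → H) : Prop :=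
  ∀ x : H, lam⁻¹ • (x - J x) ∈ A (J x)

open Set Filter

/-!
Write `g(t) = A_{λ(t)}(x(t))` and `λ(t) = c t²`. Relative to any zero `z` of `A`, the energy
`E(t) = t ⟪x - z, ẋ⟫ + (α - 1)/2 ‖x - z‖² + c α t² ‖ẋ‖²` dominates `‖x - z‖²`, and cocoercivity of
`g` gives `E' ≤ -κ (t ‖ẋ‖² + t³ ‖ẍ‖²)` for some `κ > 0`, because the condition on `ε` amounts to
`c α (α - 2) > 1`. The mean value theorem on `[t, 2t]` then yields times `s(t) ∈ [t, 2t]` along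
which `s ‖ẋ(s)‖` and `s² ‖ẍ(s)‖` vanish, hence also `λ(s) g(s)`. As `t² ‖ẋ‖²` converges, its limit
is `0`; this makes `‖x - z‖` convergent and `x(s(t)) - x(t)` vanish. Opial's lemma and
demiclosedness of the graph of `A` give a weak limit of `x` along `s(t)`, which is then the weak
limit of `x` itself.
-/

open Asymptotics
open scoped Topology

section RealAnalysis

theorem exists_tendsto_of_deriv_nonpos {f : ℝ → ℝ} {a m : ℝ}
    (hf : ∀ t, a ≤ t → DifferentiableAt ℝ f t) (hf' : ∀ t, a ≤ t → deriv f t ≤ 0)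
    (hm : ∀ t, a ≤ t → m ≤ f t) : ∃ l, Tendsto f atTop (𝓝 l) := by
  have hanti : AntitoneOn f (Ici a) := antitoneOn_of_deriv_nonpos (convex_Ici a)
    (fun t ht => (hf t ht).continuousAt.continuousWithinAt)
    (fun t ht => (hf t (interior_subset ht)).differentiableWithinAt)
    (fun t ht => hf' t (interior_subset ht))
  have hmax : Antitone fun t => f (max t a) := fun s t hst =>
    hanti (le_max_right s a) (le_max_right t a) (max_le_max_right a hst)
  have hbdd : BddBelow (range fun t => f (max t a)) :=
    ⟨m, forall_mem_range.2 fun t => hm _ (le_max_right t a)⟩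
  refine ⟨_, (tendsto_atTop_ciInf hmax hbdd).congr' ?_⟩
  filter_upwards [eventually_ge_atTop a] with t ht
  rw [max_eq_left ht]

/- The times are given by the mean value theorem for `V` on `[t, 2t]`: there
`s D(s) ≤ 2t D(s) ≤ -2t V'(s) = 2 (V(t) - V(2t))`. -/
theorem exists_time_mul_dissipation_tendsto_zero {V D : ℝ → ℝ} {a l : ℝ} (ha : 0 < a)
    (hV : ∀ t, a ≤ t → DifferentiableAt ℝ V t) (hVD : ∀ t, a ≤ t → deriv V t ≤ -D t)
    (hD : ∀ t, a ≤ t → 0 ≤ D t) (hl : Tendsto V atTop (𝓝 l)) :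
    ∃ s : ℝ → ℝ, (∀ t, a ≤ t → s t ∈ Icc t (2 * t)) ∧
      Tendsto (fun t => s t * D (s t)) atTop (𝓝 0) := by
  have hmvt : ∀ t, a ≤ t → ∃ s, s ∈ Icc t (2 * t) ∧ t * deriv V s = V (2 * t) - V t := by
    intro t ht
    have htpos : 0 < t := ha.trans_le ht
    obtain ⟨s, hs, hslope⟩ := exists_deriv_eq_slope V (show t < 2 * t by linarith)
      (fun r hr => (hV r (ht.trans hr.1)).continuousAt.continuousWithinAt)
      (fun r hr => (hV r (ht.trans hr.1.le)).differentiableWithinAt)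
    refine ⟨s, Ioo_subset_Icc_self hs, ?_⟩
    rw [hslope]
    field_simp
    ring
  choose! s hs hslope using hmvt
  refine ⟨s, hs, ?_⟩
  have hdouble : Tendsto (fun t : ℝ => 2 * t) atTop atTop :=
    tendsto_id.const_mul_atTop two_pos
  have hdecrease : Tendsto (fun t => 2 * (V t - V (2 * t))) atTop (𝓝 0) := by
    simpa using (hl.sub (hl.comp hdouble)).const_mul 2
  refine squeeze_zero' ?_ ?_ hdecrease
  · filter_upwards [eventually_ge_atTop a] with t ht
    have hst : a ≤ s t := ht.trans (hs t ht).1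
    exact mul_nonneg (ha.le.trans hst) (hD _ hst)
  · filter_upwards [eventually_ge_atTop a] with t ht
    have hst : a ≤ s t := ht.trans (hs t ht).1
    calc s t * D (s t) ≤ 2 * t * D (s t) :=
          mul_le_mul_of_nonneg_right (hs t ht).2 (hD _ hst)
      _ ≤ 2 * t * -deriv V (s t) := by
          have htpos : 0 < t := ha.trans_le ht
          gcongr
          linarith [hVD _ hst]
      _ = 2 * (V t - V (2 * t)) := by linear_combination -2 * hslope t ht

theorem tendsto_atTop_of_mem_Icc {s u : ℝ → ℝ} {a : ℝ} (hs : ∀ t, a ≤ t → s t ∈ Icc t (u t)) :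
    Tendsto s atTop atTop :=
  tendsto_atTop_mono' _ ((eventually_ge_atTop a).mono fun t ht => (hs t ht).1) tendsto_id

theorem tendsto_comp_sub_zero_of_tendsto_mul_norm_deriv {F : Type*} [NormedAddCommGroup F]
    [NormedSpace ℝ F] {x x' : ℝ → F} {s : ℝ → ℝ} {a : ℝ}
    (hx : ∀ t, a ≤ t → HasDerivAt x (x' t) t)
    (hx' : Tendsto (fun t => t * ‖x' t‖) atTop (𝓝 0))
    (hs : ∀ t, a ≤ t → s t ∈ Icc t (2 * t)) :
    Tendsto (fun t => x (s t) - x t) atTop (𝓝 0) := by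
  rw [NormedAddGroup.tendsto_nhds_zero]
  intro η hη
  obtain ⟨T, hT⟩ := eventually_atTop.1 (hx'.eventually_lt_const (half_pos hη))
  filter_upwards [eventually_ge_atTop a, eventually_ge_atTop T, eventually_gt_atTop 0]
    with t hat hTt htpos
  obtain ⟨hts, hst⟩ := hs t hat
  have hspeed : ∀ r ∈ Icc t (s t), ‖x' r‖ ≤ η / 2 / t := fun r hr => by
    rw [le_div_iff₀' htpos]
    exact (mul_le_mul_of_nonneg_right hr.1 (norm_nonneg _)).trans (hT r (hTt.trans hr.1)).le
  calc ‖x (s t) - x t‖ ≤ η / 2 / t * ‖s t - t‖ :=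
        (convex_Icc t (s t)).norm_image_sub_le_of_norm_hasDerivWithin_le
          (fun r hr => (hx r (hat.trans hr.1)).hasDerivWithinAt) hspeed
          (left_mem_Icc.2 hts) (right_mem_Icc.2 hts)
    _ ≤ η / 2 / t * t := by
        gcongr
        rw [Real.norm_of_nonneg (sub_nonneg.2 hts)]
        linarith
    _ < η := by
        rw [div_mul_cancel₀ _ htpos.ne']
        exact half_lt_self hη

theorem tendsto_zero_of_tendsto_sq_zero {ι : Type*} {l : Filter ι} {f : ι → ℝ}
    (hf : Tendsto (fun i => f i ^ 2) l (𝓝 0)) : Tendsto f l (𝓝 0) := by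
  rw [← isLittleO_one_iff ℝ] at hf ⊢
  refine IsLittleO.of_pow (n := 2) ?_ two_ne_zero
  simpa only [Pi.pow_def, one_pow] using hf

end RealAnalysis

section WeakConvergence

variable {E ι : Type*} [NormedAddCommGroup E] {l : Filter ι} {x y : ι → E} {p q : E}

theorem isBigO_one_of_sub_const (hx : (fun i => x i - p) =O[l] fun _ => (1 : ℝ)) :
    x =O[l] fun _ => (1 : ℝ) := by
  simpa only [sub_add_cancel] using hx.add (isBigO_const_const p one_ne_zero l)

variable [InnerProductSpace ℝ E]

/-- Weak convergence of `x` to `p` along the filter `l` in a real inner product space, tested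
against vectors through the inner product. -/
def TendstoWeakly (x : ι → E) (l : Filter ι) (p : E) : Prop :=
  ∀ y : E, Tendsto (fun i => ⟪x i, y⟫) l (𝓝 ⟪p, y⟫)

theorem TendstoWeakly.of_sub_tendsto_zero (hx : TendstoWeakly x l p)
    (hxy : Tendsto (fun i => x i - y i) l (𝓝 0)) : TendstoWeakly y l p := fun v => by
  have hdiff : Tendsto (fun i => ⟪x i - y i, v⟫) l (𝓝 0) := by
    simpa only [inner_zero_left] using hxy.inner (tendsto_const_nhds (x := v))
  simpa only [inner_sub_left, sub_sub_cancel, sub_zero] using (hx v).sub hdiff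

theorem tendsto_inner_zero_of_isBigO_one (hx : Tendsto x l (𝓝 0))
    (hy : y =O[l] fun _ => (1 : ℝ)) : Tendsto (fun i => ⟪x i, y i⟫) l (𝓝 0) :=
  hx.op_zero_isBoundedUnder_le ((isBigO_one_iff ℝ).1 hy) (fun u v => ⟪u, v⟫) norm_inner_le_norm

theorem exists_tendstoWeakly_ultrafilter [CompleteSpace E] {U : Ultrafilter ι}
    (hx : x =O[U] fun _ => (1 : ℝ)) : ∃ p, TendstoWeakly x U p := by
  obtain ⟨M, hM⟩ := ((isBigO_one_iff ℝ).1 hx).eventually_le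
  let φ : ι → WeakDual ℝ E := fun i =>
    StrongDual.toWeakDual (InnerProductSpace.toDual ℝ E (x i))
  have hmem : ∀ᶠ i in (U : Filter ι),
      φ i ∈ WeakDual.toStrongDual ⁻¹' Metric.closedBall (0 : StrongDual ℝ E) M := by
    filter_upwards [hM] with i hi
    simpa [φ] using hi
  obtain ⟨f, -, hf⟩ := (WeakDual.isCompact_closedBall (0 : StrongDual ℝ E) M).ultrafilter_le_nhds
    (U.map φ) (le_principal_iff.2 hmem)
  refine ⟨(InnerProductSpace.toDual ℝ E).symm (WeakDual.toStrongDual f), fun v => ?_⟩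
  rw [InnerProductSpace.toDual_symm_apply]
  exact ((WeakDual.eval_continuous v).tendsto f).comp hf

theorem eq_of_tendstoWeakly_of_tendsto_norm_sub {U V : Filter ι} [U.NeBot] [V.NeBot]
    (hU : U ≤ l) (hV : V ≤ l) (hp : TendstoWeakly x U p) (hq : TendstoWeakly x V q) {a b : ℝ}
    (ha : Tendsto (fun i => ‖x i - p‖) l (𝓝 a)) (hb : Tendsto (fun i => ‖x i - q‖) l (𝓝 b)) :
    p = q := by
  have hinner : Tendsto (fun i => ⟪x i, p - q⟫) l
      (𝓝 ((b ^ 2 - a ^ 2 + ‖p‖ ^ 2 - ‖q‖ ^ 2) / 2)) := by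
    refine (((((hb.pow 2).sub (ha.pow 2)).add_const _).sub_const _).div_const 2).congr fun i => ?_
    rw [norm_sub_sq_real, norm_sub_sq_real, inner_sub_right]
    ring
  have hpq : ⟪p, p - q⟫ = ⟪q, p - q⟫ :=
    (tendsto_nhds_unique (hp _) (hinner.mono_left hU)).trans
      (tendsto_nhds_unique (hinner.mono_left hV) (hq _))
  rw [← sub_eq_zero, ← inner_self_eq_zero (𝕜 := ℝ), inner_sub_left, hpq, sub_self]

theorem exists_tendstoWeakly_of_opial [CompleteSpace E] [l.NeBot] {S : Set E} (hS : S.Nonempty)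
    (hnorm : ∀ z ∈ S, ∃ r, Tendsto (fun i => ‖x i - z‖) l (𝓝 r))
    (hcluster : ∀ (U : Ultrafilter ι) (p : E), (U : Filter ι) ≤ l → TendstoWeakly x U p → p ∈ S) :
    ∃ p ∈ S, TendstoWeakly x l p := by
  have hbdd : x =O[l] fun _ => (1 : ℝ) := by
    obtain ⟨z, hz⟩ := hS
    obtain ⟨r, hr⟩ := hnorm z hz
    exact isBigO_one_of_sub_const (hr.isBigO_one ℝ).of_norm_left
  have hlim : ∀ U : Ultrafilter ι, ↑U ≤ l → ∃ p ∈ S, TendstoWeakly x U p := fun U hU =>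
    (exists_tendstoWeakly_ultrafilter (hbdd.mono hU)).imp fun p hp => ⟨hcluster U p hU hp, hp⟩
  obtain ⟨p, hpS, hp⟩ := hlim (Ultrafilter.of l) (Ultrafilter.of_le l)
  refine ⟨p, hpS, fun y => tendsto_iff_ultrafilter _ _ _ |>.2 fun U hU => ?_⟩
  obtain ⟨q, hqS, hq⟩ := hlim U hU
  obtain ⟨a, ha⟩ := hnorm p hpS
  obtain ⟨b, hb⟩ := hnorm q hqS
  obtain rfl := eq_of_tendstoWeakly_of_tendsto_norm_sub (Ultrafilter.of_le l) hU hp hq ha hb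
  exact hq y

end WeakConvergence

section MonotoneOperators

variable {E ι : Type*} [NormedAddCommGroup E] [InnerProductSpace ℝ E] {l : Filter ι}
  {A : E → Set E}

theorem MaximallyMonotone.mem_of_tendstoWeakly [l.NeBot] (hA : MaximallyMonotone A)
    {y u : ι → E} {p v : E} (hyu : ∀ᶠ i in l, u i ∈ A (y i)) (hy : TendstoWeakly y l p)
    (hybdd : y =O[l] fun _ => (1 : ℝ)) (hu : Tendsto u l (𝓝 v)) : v ∈ A p := by
  refine hA.2 p v fun w b hb => ?_
  have hstrong : Tendsto (fun i => ⟪u i - v, y i - w⟫) l (𝓝 0) :=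
    tendsto_inner_zero_of_isBigO_one (tendsto_sub_nhds_zero_iff.2 hu)
      (hybdd.sub (isBigO_const_const w one_ne_zero l))
  have hweak : Tendsto (fun i => ⟪v - b, y i - w⟫) l (𝓝 ⟪v - b, p - w⟫) := by
    simp only [real_inner_comm _ (v - b)]
    simpa only [inner_sub_left _ w] using (hy (v - b)).sub_const ⟪w, v - b⟫
  have hlim : Tendsto (fun i => ⟪u i - b, y i - w⟫) l (𝓝 ⟪v - b, p - w⟫) := by
    simpa only [← inner_add_left, sub_add_sub_cancel, zero_add] using hstrong.add hweak
  exact ge_of_tendsto hlim (hyu.mono fun i hi => hA.1 hi hb)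

/-- The Yosida regularization `A_lam = lam⁻¹ (I - J)` expressed through the resolvent `J` of index
`lam`; for a resolvent, `IsResolvent A lam J` says that `yosida lam J x ∈ A (J x)`. -/
noncomputable def yosida (lam : ℝ) (J : E → E) (x : E) : E :=
  lam⁻¹ • (x - J x)

theorem smul_yosida {lam : ℝ} (hlam : lam ≠ 0) (J : E → E) (x : E) :
    lam • yosida lam J x = x - J x :=
  smul_inv_smul₀ hlam _

theorem IsResolvent.yosida_cocoercive {lam : ℝ} {J : E → E} (hJ : IsResolvent A lam J)
    (hA : MonotoneOp A) (hlam : lam ≠ 0) {z : E} (hz : (0 : E) ∈ A z) (x : E) :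
    lam * ‖yosida lam J x‖ ^ 2 ≤ ⟪yosida lam J x, x - z⟫ := by
  have hJx : J x = x - lam • yosida lam J x := by
    rw [smul_yosida hlam, sub_sub_cancel]
  have hmono : 0 ≤ ⟪yosida lam J x - 0, J x - z⟫ := hA (hJ x) hz
  rw [hJx, sub_zero, sub_right_comm, inner_sub_right, real_inner_smul_right,
    real_inner_self_eq_norm_sq] at hmono
  linarith

theorem MaximallyMonotone.zero_mem_of_tendsto_smul_yosida [l.NeBot] (hA : MaximallyMonotone A)
    {J : ℝ → E → E} (hJ : ∀ r, 0 < r → IsResolvent A r (J r)) {lam : ι → ℝ} {x : ι → E} {p : E}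
    (hlam : Tendsto lam l atTop) (hx : TendstoWeakly x l p) (hxbdd : x =O[l] fun _ => (1 : ℝ))
    (hres : Tendsto (fun i => lam i • yosida (lam i) (J (lam i)) (x i)) l (𝓝 0)) :
    (0 : E) ∈ A p := by
  have hlampos : ∀ᶠ i in l, 0 < lam i := hlam.eventually_gt_atTop 0
  have hyosida : Tendsto (fun i => yosida (lam i) (J (lam i)) (x i)) l (𝓝 0) := by
    have hlim := hlam.inv_tendsto_atTop.smul hres
    rw [zero_smul] at hlim
    exact hlim.congr' (hlampos.mono fun i hi => inv_smul_smul₀ hi.ne' _)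
  have hsub : Tendsto (fun i => x i - J (lam i) (x i)) l (𝓝 0) :=
    hres.congr' (hlampos.mono fun i hi => smul_yosida hi.ne' _ _)
  have hJbdd : (fun i => J (lam i) (x i)) =O[l] fun _ => (1 : ℝ) := by
    simpa only [sub_sub_cancel] using hxbdd.sub (hsub.isBigO_one ℝ)
  exact hA.mem_of_tendstoWeakly (hlampos.mono fun i hi => hJ _ hi (x i))
    (hx.of_sub_tendsto_zero hsub) hJbdd hyosida

end MonotoneOperators

section DampedTrajectories

variable {E : Type*} [NormedAddCommGroup E] {t₀ α c : ℝ} {g x x' x'' : ℝ → E} {z : E}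

/-- The rate `t ‖ẋ(t)‖² + t³ ‖ẍ(t)‖²` which controls the decrease of the energy. -/
def dissipation (x' x'' : ℝ → E) (t : ℝ) : ℝ :=
  t * ‖x' t‖ ^ 2 + t ^ 3 * ‖x'' t‖ ^ 2

theorem dissipation_nonneg {t : ℝ} (ht : 0 ≤ t) : 0 ≤ dissipation x' x'' t := by
  unfold dissipation
  positivity

variable [InnerProductSpace ℝ E]

/-- `x`, with velocity `x'` and acceleration `x''`, solves `ẍ(t) + (α/t)ẋ(t) + g(t) = 0` on
`[t₀, ∞)` with `t₀ > 0`. The force is recorded as a function `g` of time only. -/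
structure IsDampedTrajectory (t₀ α : ℝ) (g x x' x'' : ℝ → E) : Prop where
  pos : 0 < t₀
  hasDerivAt : ∀ t, t₀ ≤ t → HasDerivAt x (x' t) t
  hasDerivAt_velocity : ∀ t, t₀ ≤ t → HasDerivAt x' (x'' t) t
  ode : ∀ t, t₀ ≤ t → x'' t + (α / t) • x' t + g t = 0

/-- The force `g` is cocoercive with modulus `c t²` along `x` on `[t₀, ∞)`, relative to the
equilibrium `z`. This is what `g(t) = A_{λ(t)}(x(t))` with `λ(t) = c t²` satisfies when
`0 ∈ A z`. -/
def IsCocoerciveAlong (t₀ c : ℝ) (g x : ℝ → E) (z : E) : Prop :=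
  ∀ t, t₀ ≤ t → c * t ^ 2 * ‖g t‖ ^ 2 ≤ ⟪g t, x t - z⟫

theorem IsCocoerciveAlong.mul_sq_mul_norm_le (hg : IsCocoerciveAlong t₀ c g x z) {t : ℝ}
    (ht : t₀ ≤ t) :
    c * t ^ 2 * ‖g t‖ ≤ ‖x t - z‖ := by
  rcases (norm_nonneg (g t)).eq_or_lt with hzero | hpos
  · rw [← hzero, mul_zero]
    exact norm_nonneg _
  · refine le_of_mul_le_mul_left ?_ hpos
    calc ‖g t‖ * (c * t ^ 2 * ‖g t‖) = c * t ^ 2 * ‖g t‖ ^ 2 := by ring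
      _ ≤ ⟪g t, x t - z⟫ := hg t ht
      _ ≤ ‖g t‖ * ‖x t - z‖ := real_inner_le_norm _ _

/-- The Lyapunov function of `ẍ + (α/t)ẋ + g = 0` relative to the equilibrium `z`, for a force `g`
which is cocoercive with modulus `c t²`. -/
noncomputable def energy (α c : ℝ) (z : E) (x x' : ℝ → E) (t : ℝ) : ℝ :=
  t * ⟪x t - z, x' t⟫ + (α - 1) / 2 * ‖x t - z‖ ^ 2 + c * α * (t * ‖x' t‖) ^ 2

theorem pos_of_one_lt_mul (hα : 2 < α) (hc : 1 < c * α * (α - 2)) : 0 < c := by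
  have hα2 : 0 < α * (α - 2) := mul_pos (by linarith) (by linarith)
  rw [mul_assoc] at hc
  exact pos_of_mul_pos_left (one_pos.trans hc) hα2.le

theorem one_lt_mul_of_two_div_lt {ε : ℝ} (hα : 2 < α) (hε : 2 / (α - 2) < ε) :
    1 < (1 + ε) / α ^ 2 * α * (α - 2) := by
  rw [div_lt_iff₀ (sub_pos.2 hα)] at hε
  field_simp
  linarith

theorem sq_norm_sub_le_energy (hα : 2 < α) (hc : 1 ≤ c * α * (α - 2)) (t : ℝ) :
    α / 4 * ‖x t - z‖ ^ 2 ≤ energy α c z x x' t := by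
  have hα2 : 0 < α - 2 := sub_pos.2 hα
  -- Completing the square absorbs the indefinite term `t ⟪x - z, ẋ⟫` of the energy.
  have hsq : ‖((α - 2) / 2) • (x t - z) + t • x' t‖ ^ 2 = (α - 2) *
      (energy α c z x x' t - α / 4 * ‖x t - z‖ ^ 2) - (c * α * (α - 2) - 1) * (t * ‖x' t‖) ^ 2 := by
    rw [norm_add_sq_real, norm_smul, norm_smul, real_inner_smul_left, real_inner_smul_right,
      mul_pow, mul_pow, Real.norm_eq_abs, Real.norm_eq_abs, sq_abs, sq_abs, energy]
    ring
  have hkin : 0 ≤ (c * α * (α - 2) - 1) * (t * ‖x' t‖) ^ 2 :=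
    mul_nonneg (sub_nonneg.2 hc) (sq_nonneg _)
  have hgap : 0 ≤ (α - 2) * (energy α c z x x' t - α / 4 * ‖x t - z‖ ^ 2) := by
    linarith [sq_nonneg ‖((α - 2) / 2) • (x t - z) + t • x' t‖]
  exact sub_nonneg.1 (nonneg_of_mul_nonneg_right hgap hα2)

theorem energy_nonneg (hα : 2 < α) (hc : 1 ≤ c * α * (α - 2)) (t : ℝ) :
    0 ≤ energy α c z x x' t :=
  le_trans (by positivity) (sq_norm_sub_le_energy hα hc t)

theorem hasDerivAt_sq_mul_norm {f : ℝ → E} {v : E} {t : ℝ} (hf : HasDerivAt f v t) :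
    HasDerivAt (fun r => (r * ‖f r‖) ^ 2) (2 * (t * ‖f t‖ ^ 2 + t ^ 2 * ⟪f t, v⟫)) t := by
  have h := (hasDerivAt_pow 2 t).mul hf.norm_sq
  refine (h.congr_deriv ?_).congr_of_eventuallyEq (.of_eq (funext fun r => ?_))
  · push_cast
    ring
  · simp only [Pi.mul_apply, mul_pow]

theorem two_mul_add_inner_le_dissipation {t : ℝ} (ht : 0 ≤ t) :
    2 * (t * ‖x' t‖ ^ 2 + t ^ 2 * ⟪x' t, x'' t⟫) ≤ 3 * dissipation x' x'' t := by
  have hinner : ⟪x' t, t • x'' t⟫ ≤ (‖x' t‖ ^ 2 + ‖t • x'' t‖ ^ 2) / 2 := by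
    linarith [norm_sub_sq_real (x' t) (t • x'' t), sq_nonneg ‖x' t - t • x'' t‖]
  rw [real_inner_smul_right, norm_smul, Real.norm_of_nonneg ht] at hinner
  have hcube : 0 ≤ t ^ 3 * ‖x'' t‖ ^ 2 := by positivity
  unfold dissipation
  linarith [mul_le_mul_of_nonneg_left hinner ht]

namespace IsDampedTrajectory

theorem hasDerivAt_energy (h : IsDampedTrajectory t₀ α g x x' x'') (c : ℝ) (z : E) {t : ℝ}
    (ht : t₀ ≤ t) :
    HasDerivAt (energy α c z x x') (t * ‖x' t‖ ^ 2 - t * ⟪g t, x t - z⟫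
      + 2 * (c * α) * (t * ‖x' t‖ ^ 2 + t ^ 2 * ⟪x' t, x'' t⟫)) t := by
  have htpos : 0 < t := h.pos.trans_le ht
  have hdisp : HasDerivAt (fun r => x r - z) (x' t) t := (h.hasDerivAt t ht).sub_const z
  have hvel : HasDerivAt x' (x'' t) t := h.hasDerivAt_velocity t ht
  have hg : g t = -(x'' t + (α / t) • x' t) := eq_neg_of_add_eq_zero_right (h.ode t ht)
  have hsum := (((hasDerivAt_id t).mul (hdisp.inner ℝ hvel)).add
    (hdisp.norm_sq.const_mul ((α - 1) / 2))).add ((hasDerivAt_sq_mul_norm hvel).const_mul (c * α))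
  refine HasDerivAt.congr_deriv (f := energy α c z x x') hsum ?_
  rw [hg, inner_neg_left, inner_add_left, real_inner_smul_left, real_inner_self_eq_norm_sq,
    real_inner_comm (x'' t) (x t - z), real_inner_comm (x' t) (x t - z), id]
  field_simp
  ring

theorem cube_mul_sq_norm_force (h : IsDampedTrajectory t₀ α g x x' x'') {t : ℝ} (ht : t₀ ≤ t) :
    t ^ 3 * ‖g t‖ ^ 2 =
      t ^ 3 * ‖x'' t‖ ^ 2 + 2 * α * (t ^ 2 * ⟪x' t, x'' t⟫) + α ^ 2 * (t * ‖x' t‖ ^ 2) := by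
  have htpos : 0 < t := h.pos.trans_le ht
  rw [eq_neg_of_add_eq_zero_right (h.ode t ht), norm_neg, norm_add_sq_real, norm_smul,
    real_inner_smul_right, Real.norm_eq_abs, mul_pow, sq_abs, real_inner_comm]
  field_simp

theorem exists_deriv_energy_le (h : IsDampedTrajectory t₀ α g x x' x'') (hα : 2 < α)
    (hc : 1 < c * α * (α - 2)) (hg : IsCocoerciveAlong t₀ c g x z) :
    ∃ κ > 0, ∀ t, t₀ ≤ t → deriv (energy α c z x x') t ≤ -(κ * dissipation x' x'' t) := by
  have hcpos : 0 < c := pos_of_one_lt_mul hα hc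
  refine ⟨min c (c * α * (α - 2) - 1), lt_min hcpos (sub_pos.2 hc), fun t ht => ?_⟩
  have htpos : 0 < t := h.pos.trans_le ht
  have hforce : c * (t ^ 3 * ‖g t‖ ^ 2) ≤ t * ⟪g t, x t - z⟫ := by
    linarith [mul_le_mul_of_nonneg_left (hg t ht) htpos.le]
  rw [h.cube_mul_sq_norm_force ht] at hforce
  calc deriv (energy α c z x x') t
      ≤ -((c * α * (α - 2) - 1) * (t * ‖x' t‖ ^ 2) + c * (t ^ 3 * ‖x'' t‖ ^ 2)) := by
        rw [(h.hasDerivAt_energy c z ht).deriv]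
        linarith
    _ ≤ -(min c (c * α * (α - 2) - 1) * dissipation x' x'' t) := by
        rw [dissipation, mul_add]
        gcongr
        · exact min_le_right _ _
        · exact min_le_left _ _

theorem exists_tendsto_energy (h : IsDampedTrajectory t₀ α g x x' x'') (hα : 2 < α)
    (hc : 1 < c * α * (α - 2)) (hg : IsCocoerciveAlong t₀ c g x z) :
    ∃ l, Tendsto (energy α c z x x') atTop (𝓝 l) := by
  obtain ⟨κ, hκ, hderiv⟩ := h.exists_deriv_energy_le hα hc hg
  refine exists_tendsto_of_deriv_nonpos
    (fun t ht => (h.hasDerivAt_energy c z ht).differentiableAt) (fun t ht => ?_)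
    fun t _ => energy_nonneg hα hc.le t
  exact (hderiv t ht).trans
    (neg_nonpos.2 (mul_nonneg hκ.le (dissipation_nonneg (h.pos.le.trans ht))))

theorem exists_time_tendsto_zero (h : IsDampedTrajectory t₀ α g x x' x'') (hα : 2 < α)
    (hc : 1 < c * α * (α - 2)) (hg : IsCocoerciveAlong t₀ c g x z) :
    ∃ s : ℝ → ℝ, (∀ t, t₀ ≤ t → s t ∈ Icc t (2 * t)) ∧
      Tendsto (fun t => s t * ‖x' (s t)‖) atTop (𝓝 0) ∧
      Tendsto (fun t => s t ^ 2 * ‖x'' (s t)‖) atTop (𝓝 0) := by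
  obtain ⟨κ, hκ, hderiv⟩ := h.exists_deriv_energy_le hα hc hg
  obtain ⟨l, hl⟩ := h.exists_tendsto_energy hα hc hg
  obtain ⟨s, hs, hlim⟩ := exists_time_mul_dissipation_tendsto_zero h.pos
    (fun t ht => (h.hasDerivAt_energy c z ht).differentiableAt) hderiv
    (fun t ht => mul_nonneg hκ.le (dissipation_nonneg (h.pos.le.trans ht))) hl
  have hsum : Tendsto (fun t => (s t * ‖x' (s t)‖) ^ 2 + (s t ^ 2 * ‖x'' (s t)‖) ^ 2)
      atTop (𝓝 0) := by
    have := hlim.div_const κ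
    rw [zero_div] at this
    refine this.congr fun t => ?_
    rw [dissipation]
    field_simp
  refine ⟨s, hs, tendsto_zero_of_tendsto_sq_zero ?_, tendsto_zero_of_tendsto_sq_zero ?_⟩
  · exact squeeze_zero (fun t => sq_nonneg _) (fun t => le_add_of_nonneg_right (sq_nonneg _)) hsum
  · exact squeeze_zero (fun t => sq_nonneg _) (fun t => le_add_of_nonneg_left (sq_nonneg _)) hsum

/- `t² ‖ẋ‖²` need not be monotone, but its derivative is at most three times the dissipation, so
adding `3/κ` times the energy makes it nonincreasing. -/
theorem exists_tendsto_sq_mul_norm_velocity (h : IsDampedTrajectory t₀ α g x x' x'')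
    (hα : 2 < α) (hc : 1 < c * α * (α - 2)) (hg : IsCocoerciveAlong t₀ c g x z) :
    ∃ l, Tendsto (fun t => (t * ‖x' t‖) ^ 2) atTop (𝓝 l) := by
  obtain ⟨κ, hκ, hderiv⟩ := h.exists_deriv_energy_le hα hc hg
  obtain ⟨e, he⟩ := h.exists_tendsto_energy hα hc hg
  have hsum : ∀ t, t₀ ≤ t → HasDerivAt (fun r => (r * ‖x' r‖) ^ 2 + 3 / κ * energy α c z x x' r)
      (2 * (t * ‖x' t‖ ^ 2 + t ^ 2 * ⟪x' t, x'' t⟫) + 3 / κ * deriv (energy α c z x x') t) t :=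
    fun t ht => (hasDerivAt_sq_mul_norm (h.hasDerivAt_velocity t ht)).fun_add
      ((h.hasDerivAt_energy c z ht).differentiableAt.hasDerivAt.const_mul _)
  have hdecay : ∀ t, t₀ ≤ t → 2 * (t * ‖x' t‖ ^ 2 + t ^ 2 * ⟪x' t, x'' t⟫)
      + 3 / κ * deriv (energy α c z x x') t ≤ 0 := fun t ht => calc
    _ ≤ 3 * dissipation x' x'' t + 3 / κ * -(κ * dissipation x' x'' t) := by
      exact add_le_add (two_mul_add_inner_le_dissipation (h.pos.le.trans ht))
        (mul_le_mul_of_nonneg_left (hderiv t ht) (by positivity))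
    _ = 0 := by
      field_simp
      ring
  obtain ⟨m, hm⟩ := exists_tendsto_of_deriv_nonpos (fun t ht => (hsum t ht).differentiableAt)
    (fun t ht => (hsum t ht).deriv.trans_le (hdecay t ht))
    (fun t _ => add_nonneg (sq_nonneg _)
      (mul_nonneg (by positivity) (energy_nonneg hα hc.le t)))
  exact ⟨m - 3 / κ * e, by simpa only [add_sub_cancel_right] using hm.sub (he.const_mul (3 / κ))⟩

theorem tendsto_mul_norm_velocity (h : IsDampedTrajectory t₀ α g x x' x'') (hα : 2 < α)
    (hc : 1 < c * α * (α - 2)) (hg : IsCocoerciveAlong t₀ c g x z) :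
    Tendsto (fun t => t * ‖x' t‖) atTop (𝓝 0) := by
  obtain ⟨l, hl⟩ := h.exists_tendsto_sq_mul_norm_velocity hα hc hg
  obtain ⟨s, hs, hzero, -⟩ := h.exists_time_tendsto_zero hα hc hg
  have hsq : Tendsto (fun t => (s t * ‖x' (s t)‖) ^ 2) atTop (𝓝 0) := by
    simpa only [ne_eq, two_ne_zero, not_false_eq_true, zero_pow] using hzero.pow 2
  rw [tendsto_nhds_unique (hl.comp (tendsto_atTop_of_mem_Icc hs)) hsq] at hl
  exact tendsto_zero_of_tendsto_sq_zero hl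

theorem displacement_isBigO_one (h : IsDampedTrajectory t₀ α g x x' x'') (hα : 2 < α)
    (hc : 1 < c * α * (α - 2)) (hg : IsCocoerciveAlong t₀ c g x z) :
    (fun t => x t - z) =O[atTop] fun _ => (1 : ℝ) := by
  obtain ⟨e, he⟩ := h.exists_tendsto_energy hα hc hg
  have hsq : (fun t => ‖x t - z‖ ^ 2) =O[atTop] energy α c z x x' := by
    refine .of_bound (4 / α) (.of_forall fun t => ?_)
    rw [norm_pow, norm_norm, Real.norm_of_nonneg (energy_nonneg hα hc.le t), div_mul_eq_mul_div,
      le_div_iff₀ (by linarith)]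
    linarith [sq_norm_sub_le_energy (z := z) (x := x) (x' := x') hα hc.le t]
  refine IsBigO.of_norm_left (IsBigO.of_pow two_ne_zero ?_)
  simpa only [Pi.pow_def, one_pow] using hsq.trans (he.isBigO_one ℝ)

theorem exists_tendsto_norm_sub (h : IsDampedTrajectory t₀ α g x x' x'') (hα : 2 < α)
    (hc : 1 < c * α * (α - 2)) (hg : IsCocoerciveAlong t₀ c g x z) :
    ∃ r, Tendsto (fun t => ‖x t - z‖) atTop (𝓝 r) := by
  obtain ⟨e, he⟩ := h.exists_tendsto_energy hα hc hg
  have hspeed := h.tendsto_mul_norm_velocity hα hc hg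
  have hmom : Tendsto (fun t => t • x' t) atTop (𝓝 0) := by
    rw [tendsto_zero_iff_norm_tendsto_zero]
    simpa only [norm_smul, norm_mul, norm_norm, norm_zero] using hspeed.norm
  have hcross := tendsto_inner_zero_of_isBigO_one hmom (h.displacement_isBigO_one hα hc hg)
  have hsq : Tendsto (fun t => ‖x t - z‖ ^ 2) atTop (𝓝 (2 / (α - 1) * e)) := by
    have hlim := ((he.sub hcross).sub ((hspeed.pow 2).const_mul (c * α))).const_mul (2 / (α - 1))
    have hα1 : α - 1 ≠ 0 := by linarith
    simp only [ne_eq, two_ne_zero, not_false_eq_true, zero_pow, mul_zero, sub_zero] at hlim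
    refine hlim.congr fun t => ?_
    rw [energy, real_inner_smul_left, real_inner_comm]
    field_simp
    ring
  exact ⟨_, by simpa only [Real.sqrt_sq (norm_nonneg _)] using hsq.sqrt⟩

theorem tendsto_velocity (h : IsDampedTrajectory t₀ α g x x' x'') (hα : 2 < α)
    (hc : 1 < c * α * (α - 2)) (hg : IsCocoerciveAlong t₀ c g x z) :
    Tendsto x' atTop (𝓝 0) := by
  have hlim := tendsto_inv_atTop_zero.mul (h.tendsto_mul_norm_velocity hα hc hg)
  rw [mul_zero] at hlim
  refine tendsto_zero_iff_norm_tendsto_zero.2 (hlim.congr' ?_)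
  filter_upwards [eventually_ne_atTop 0] with t ht
  exact inv_mul_cancel_left₀ ht _

theorem tendsto_force (h : IsDampedTrajectory t₀ α g x x' x'') (hα : 2 < α)
    (hc : 1 < c * α * (α - 2)) (hg : IsCocoerciveAlong t₀ c g x z) :
    Tendsto g atTop (𝓝 0) := by
  have hcpos : 0 < c := pos_of_one_lt_mul hα hc
  have hbdd : (fun t => t ^ 2 • g t) =O[atTop] fun _ => (1 : ℝ) := by
    refine .trans (.of_bound c⁻¹ ?_) (h.displacement_isBigO_one hα hc hg)
    filter_upwards [eventually_ge_atTop t₀] with t ht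
    rw [norm_smul, Real.norm_of_nonneg (sq_nonneg t), inv_mul_eq_div, le_div_iff₀' hcpos,
      ← mul_assoc]
    exact hg.mul_sq_mul_norm_le ht
  have hinv : Tendsto (fun t : ℝ => (t ^ 2)⁻¹) atTop (𝓝 0) :=
    (tendsto_pow_atTop two_ne_zero).inv_tendsto_atTop
  refine (hinv.zero_smul_isBoundedUnder_le ((isBigO_one_iff ℝ).1 hbdd)).congr' ?_
  filter_upwards [eventually_ne_atTop 0] with t ht
  exact inv_smul_smul₀ (pow_ne_zero 2 ht) (g t)

theorem tendsto_acceleration (h : IsDampedTrajectory t₀ α g x x' x'') (hα : 2 < α)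
    (hc : 1 < c * α * (α - 2)) (hg : IsCocoerciveAlong t₀ c g x z) :
    Tendsto x'' atTop (𝓝 0) := by
  have hdamping : Tendsto (fun t => (α / t) • x' t) atTop (𝓝 0) := by
    simpa only [id, zero_smul] using
      (tendsto_const_nhds.div_atTop tendsto_id).smul (h.tendsto_velocity hα hc hg)
  have hlim := (hdamping.add (h.tendsto_force hα hc hg)).neg
  rw [add_zero, neg_zero] at hlim
  refine hlim.congr' ?_
  filter_upwards [eventually_ge_atTop t₀] with t ht
  exact (eq_neg_of_add_eq_zero_left ((add_assoc _ _ _).symm.trans (h.ode t ht))).symm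

theorem exists_time_tendsto_sq_smul_force (h : IsDampedTrajectory t₀ α g x x' x'') (hα : 2 < α)
    (hc : 1 < c * α * (α - 2)) (hg : IsCocoerciveAlong t₀ c g x z) :
    ∃ s : ℝ → ℝ, (∀ t, t₀ ≤ t → s t ∈ Icc t (2 * t)) ∧
      Tendsto (fun t => s t ^ 2 • g (s t)) atTop (𝓝 0) := by
  obtain ⟨s, hs, hvel, hacc⟩ := h.exists_time_tendsto_zero hα hc hg
  have hlim : Tendsto (fun t => s t ^ 2 * ‖x'' (s t)‖ + |α| * (s t * ‖x' (s t)‖)) atTop (𝓝 0) := by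
    simpa only [mul_zero, add_zero] using hacc.add (hvel.const_mul |α|)
  refine ⟨s, hs, squeeze_zero_norm' ?_ hlim⟩
  filter_upwards [eventually_ge_atTop t₀] with t ht
  have hst : t₀ ≤ s t := ht.trans (hs t ht).1
  have hspos : 0 < s t := h.pos.trans_le hst
  calc ‖s t ^ 2 • g (s t)‖ = s t ^ 2 * ‖x'' (s t) + (α / s t) • x' (s t)‖ := by
        rw [eq_neg_of_add_eq_zero_right (h.ode (s t) hst), norm_smul, norm_neg,
          Real.norm_of_nonneg (sq_nonneg _)]
    _ ≤ s t ^ 2 * (‖x'' (s t)‖ + |α| / s t * ‖x' (s t)‖) := by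
        gcongr
        refine (norm_add_le _ _).trans_eq ?_
        rw [norm_smul, norm_div, Real.norm_eq_abs, Real.norm_of_nonneg hspos.le]
    _ = s t ^ 2 * ‖x'' (s t)‖ + |α| * (s t * ‖x' (s t)‖) := by field_simp

theorem exists_tendstoWeakly [CompleteSpace E] (h : IsDampedTrajectory t₀ α g x x' x'')
    (hα : 2 < α) (hc : 1 < c * α * (α - 2)) {S : Set E} (hS : S.Nonempty)
    (hg : ∀ z ∈ S, IsCocoerciveAlong t₀ c g x z)
    (hclosed : ∀ (U : Ultrafilter ℝ) (p : E), (U : Filter ℝ) ≤ atTop →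
      Tendsto (fun t => t ^ 2 • g t) U (𝓝 0) → TendstoWeakly x U p → p ∈ S) :
    ∃ p ∈ S, TendstoWeakly x atTop p := by
  obtain ⟨z, hz⟩ := hS
  obtain ⟨s, hs, hforce⟩ := h.exists_time_tendsto_sq_smul_force hα hc (hg z hz)
  have hsTop : Tendsto s atTop atTop := tendsto_atTop_of_mem_Icc hs
  have hmove : Tendsto (fun t => x (s t) - x t) atTop (𝓝 0) :=
    tendsto_comp_sub_zero_of_tendsto_mul_norm_deriv h.hasDerivAt
      (h.tendsto_mul_norm_velocity hα hc (hg z hz)) hs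
  obtain ⟨p, hp, hlim⟩ : ∃ p ∈ S, TendstoWeakly (x ∘ s) atTop p := by
    refine exists_tendstoWeakly_of_opial ⟨z, hz⟩ (fun z hz => ?_) fun U p hU hp => ?_
    · obtain ⟨r, hr⟩ := h.exists_tendsto_norm_sub hα hc (hg z hz)
      exact ⟨r, hr.comp hsTop⟩
    · exact hclosed (U.map s) p (hsTop.mono_left hU) (hforce.mono_left hU) hp
  exact ⟨p, hp, hlim.of_sub_tendsto_zero hmove⟩

end IsDampedTrajectory

end DampedTrajectories

/-- Main convergence theorem for the continuous dynamics: for `α > 2` and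
`λ(t) = (1+ε)t²/α²` with `ε > 2/(α-2)`, every solution of
`ẍ + (α/t)ẋ + A_{λ(t)}(x) = 0` converges weakly to a zero of `A`, and
`‖ẋ(t)‖ → 0`, `‖ẍ(t)‖ → 0`. -/
theorem weak_convergence_continuous (A : H → Set H) (hA : MaximallyMonotone A)
    (hS : ∃ z : H, (0 : H) ∈ A z)
    (t₀ α ε : ℝ) (ht₀ : 0 < t₀) (hα : 2 < α) (hε : 2 / (α - 2) < ε)
    (lam : ℝ → ℝ) (hlamdef : ∀ t, lam t = (1 + ε) * t ^ 2 / α ^ 2)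
    (J : ℝ → H → H) (hJ : ∀ l : ℝ, 0 < l → IsResolvent A l (J l))
    (x x' x'' : ℝ → H)
    (hx : ∀ t, t₀ ≤ t → HasDerivAt x (x' t) t)
    (hx' : ∀ t, t₀ ≤ t → HasDerivAt x' (x'' t) t)
    (hode : ∀ t, t₀ ≤ t →
      x'' t + (α / t) • x' t + (lam t)⁻¹ • (x t - J (lam t) (x t)) = 0) :
    (∃ p : H, (0 : H) ∈ A p ∧
        ∀ y : H, Tendsto (fun t => ⟪x t, y⟫) atTop (nhds ⟪p, y⟫)) ∧
      Tendsto (fun t => ‖x' t‖) atTop (nhds 0) ∧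
      Tendsto (fun t => ‖x'' t‖) atTop (nhds 0) := by
  obtain ⟨c, hcdef⟩ : ∃ c, c = (1 + ε) / α ^ 2 := ⟨_, rfl⟩
  have hc : 1 < c * α * (α - 2) := hcdef ▸ one_lt_mul_of_two_div_lt hα hε
  have hlam : ∀ t, lam t = c * t ^ 2 := fun t => by rw [hlamdef, hcdef, div_mul_eq_mul_div]
  have hlamTop : Tendsto lam atTop atTop := funext hlam ▸
    (tendsto_pow_atTop two_ne_zero).const_mul_atTop (pos_of_one_lt_mul hα hc)
  have hlampos : ∀ t, t₀ ≤ t → 0 < lam t := fun t ht =>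
    hlam t ▸ mul_pos (pos_of_one_lt_mul hα hc) (pow_pos (ht₀.trans_le ht) 2)
  let g : ℝ → H := fun t => yosida (lam t) (J (lam t)) (x t)
  have htraj : IsDampedTrajectory t₀ α g x x' x'' := ⟨ht₀, hx, hx', hode⟩
  have hcoc : ∀ z, (0 : H) ∈ A z → IsCocoerciveAlong t₀ c g x z := fun z hz t ht =>
    hlam t ▸ (hJ _ (hlampos t ht)).yosida_cocoercive hA.1 (hlampos t ht).ne' hz (x t)
  obtain ⟨z, hz⟩ := hS
  refine ⟨htraj.exists_tendstoWeakly hα hc (S := {p | (0 : H) ∈ A p}) ⟨z, hz⟩ hcoc ?_,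
    tendsto_zero_iff_norm_tendsto_zero.1 (htraj.tendsto_velocity hα hc (hcoc z hz)),
    tendsto_zero_iff_norm_tendsto_zero.1 (htraj.tendsto_acceleration hα hc (hcoc z hz))⟩
  intro U p hU hforce hp
  have hbdd := isBigO_one_of_sub_const (htraj.displacement_isBigO_one hα hc (hcoc z hz))
  have hres : Tendsto (fun t => lam t • g t) U (𝓝 0) := by
    simpa only [hlam, mul_smul, smul_zero] using hforce.const_smul c
  exact hA.zero_mem_of_tendsto_smul_yosida hJ (hlamTop.mono_left hU) hp (hbdd.mono hU) hres
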